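/- arXiv:1410.6068 — 3 statements merged into one kernel-verified Lean document; each statement's English description precedes it below -/
import Mathlib

section
/- Let α < 1 and β > 1, and define v : ℝ → (0,∞) by v(q) = (1+|q|)^α for q < 0 and v(q) = (1+|q|)^β for q ≥ 0. Then there is a constant C = C(α,β) such that for every t ≥ 0 and every compactly supported C¹ function f : ℝ² → ℝ: ∫_{ℝ²} v(|x|−t) (1+||x|−t|)^{−2} f(x)² dx ≤ C ∫_{ℝ²} v(|x|−t) ( (x/|x|)·∇f(x) )² dx. -/
open MeasureTheory

noncomputable section

/-- the weight `v(q) = (1+|q|)^α` for `q < 0` and `(1+|q|)^β` for `q ≥ 0`. -/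
def Hv (α β : ℝ) : ℝ → ℝ :=
  fun q => if q < 0 then (1 + |q|) ^ α else (1 + |q|) ^ β

/-!
In polar coordinates the inequality reduces to one on each ray. There, with
`g = (1 + |q|)⁻¹ v` and `c = min (1 - α) (β - 1)`, the signs of `1 - α` and `β - 1` make `g`
increasing, with `g' ≥ c (1 + |q|)⁻² v`. The polar density `r` only helps, since
`(r g)' = g + r g' ≥ r g'`. Integrating `(r g F²)'` from `0` to a radius beyond the support of `F`
gives `c ∫ r (1 + |q|)⁻² v F² ≤ -2 ∫ r g F F'`, and since `g² = v · (1 + |q|)⁻² v`, AM-GM absorbs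
half of the left-hand side and leaves `(2 / c) ∫ r v F'²`.
-/

section Weight

variable (α β : ℝ)

lemma Hv_pos (q : ℝ) : 0 < Hv α β q := by
  unfold Hv
  split_ifs <;> positivity

lemma Hv_mul_Hv (α' β' q : ℝ) : Hv α β q * Hv α' β' q = Hv (α + α') (β + β') q := by
  have hq : 0 < 1 + |q| := by positivity
  unfold Hv
  split_ifs <;> exact (Real.rpow_add hq _ _).symm

lemma Hv_mul_rpow (γ q : ℝ) : Hv α β q * (1 + |q|) ^ γ = Hv (α + γ) (β + γ) q := by
  simpa only [Hv, ite_self] using Hv_mul_Hv α β γ γ q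

lemma continuous_Hv : Continuous (Hv α β) := by
  have continuous_power (γ : ℝ) : Continuous fun q : ℝ => (1 + |q|) ^ γ :=
    Continuous.rpow_const (by fun_prop) fun q => Or.inl (by positivity)
  refine Continuous.if (fun q hq => ?_) (continuous_power α) (continuous_power β)
  obtain rfl : q = 0 := frontier_lt_subset_eq continuous_id continuous_const hq
  simp

lemma hasDerivWithinAt_Hv_Ioi (q : ℝ) :
    HasDerivWithinAt (Hv α β) ((if q < 0 then -α else β) * Hv (α - 1) (β - 1) q) (Set.Ioi q) q := by
  rcases lt_or_ge q 0 with hq | hq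
  · have hpower : HasDerivAt (fun x : ℝ => (1 - x) ^ α) (-α * (1 - q) ^ (α - 1)) q := by
      simpa using ((hasDerivAt_id' q).const_sub 1).rpow_const (p := α) (Or.inl (by linarith))
    have heq : Hv α β =ᶠ[nhds q] fun x => (1 - x) ^ α := by
      filter_upwards [Iio_mem_nhds hq] with x (hx : x < 0)
      simp [Hv, hx, abs_of_neg hx, sub_eq_add_neg]
    simpa [Hv, hq, abs_of_neg hq, sub_eq_add_neg] using
      (hpower.congr_of_eventuallyEq heq).hasDerivWithinAt
  · have hpower : HasDerivAt (fun x : ℝ => (1 + x) ^ β) (β * (1 + q) ^ (β - 1)) q := by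
      simpa using ((hasDerivAt_id' q).const_add 1).rpow_const (p := β) (Or.inl (by linarith))
    have heq (x : ℝ) (hx : q ≤ x) : Hv α β x = (1 + x) ^ β := by
      simp [Hv, hq.trans hx, abs_of_nonneg (hq.trans hx)]
    simpa [Hv, hq.not_gt, abs_of_nonneg hq] using
      hpower.hasDerivWithinAt.congr (s := Set.Ioi q) (fun x hx => heq x (le_of_lt hx))
        (heq q le_rfl)

end Weight

section Multiplier

/-- A certificate for the one-dimensional Hardy inequality `∫ a F² ≤ (4 / c²) ∫ w F'²` on `s`: a
nonnegative function `g` with `g' ≥ c a` and `g² ≤ a w`. The derivative is only taken from the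
right, so that `g` may have a corner. -/
structure IsHardyMultiplier (c : ℝ) (a w g : ℝ → ℝ) (s : Set ℝ) : Prop where
  continuousOn : ContinuousOn g s
  nonneg : ∀ r ∈ s, 0 ≤ g r
  nonneg_left : ∀ r ∈ s, 0 ≤ a r
  nonneg_right : ∀ r ∈ s, 0 ≤ w r
  exists_hasDerivWithinAt :
    ∀ r ∈ s, ∃ g', HasDerivWithinAt g g' (Set.Ioi r) r ∧ c * a r ≤ g'
  sq_le_mul : ∀ r ∈ s, g r ^ 2 ≤ a r * w r

namespace IsHardyMultiplier

variable {c : ℝ} {a w g : ℝ → ℝ} {s : Set ℝ}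

lemma mono (h : IsHardyMultiplier c a w g s) {s' : Set ℝ} (hs : s' ⊆ s) :
    IsHardyMultiplier c a w g s' where
  continuousOn := h.continuousOn.mono hs
  nonneg r hr := h.nonneg r (hs hr)
  nonneg_left r hr := h.nonneg_left r (hs hr)
  nonneg_right r hr := h.nonneg_right r (hs hr)
  exists_hasDerivWithinAt r hr := h.exists_hasDerivWithinAt r (hs hr)
  sq_le_mul r hr := h.sq_le_mul r (hs hr)

lemma comp_sub_const (h : IsHardyMultiplier c a w g s) (t : ℝ) :
    IsHardyMultiplier c (fun r => a (r - t)) (fun r => w (r - t)) (fun r => g (r - t))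
      ((· - t) ⁻¹' s) where
  continuousOn := h.continuousOn.comp (by fun_prop) fun _ hr => hr
  nonneg r hr := h.nonneg (r - t) hr
  nonneg_left r hr := h.nonneg_left (r - t) hr
  nonneg_right r hr := h.nonneg_right (r - t) hr
  exists_hasDerivWithinAt r hr := by
    obtain ⟨g', hg', hag'⟩ := h.exists_hasDerivWithinAt (r - t) hr
    refine ⟨g', ?_, hag'⟩
    simpa only [mul_one, Function.comp_def] using
      hg'.comp r ((hasDerivAt_id' r).sub_const t).hasDerivWithinAt
        fun x hx => sub_lt_sub_right (Set.mem_Ioi.1 hx) t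
  sq_le_mul r hr := h.sq_le_mul (r - t) hr

lemma mul_left (h : IsHardyMultiplier c a w g s) {ρ ρ' : ℝ → ℝ}
    (hρ : ∀ r ∈ s, HasDerivAt ρ (ρ' r) r) (hρ0 : ∀ r ∈ s, 0 ≤ ρ r) (hρ'0 : ∀ r ∈ s, 0 ≤ ρ' r) :
    IsHardyMultiplier c (fun r => ρ r * a r) (fun r => ρ r * w r) (fun r => ρ r * g r) s where
  continuousOn :=
    ContinuousOn.mul (fun r hr => (hρ r hr).continuousAt.continuousWithinAt) h.continuousOn
  nonneg r hr := mul_nonneg (hρ0 r hr) (h.nonneg r hr)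
  nonneg_left r hr := mul_nonneg (hρ0 r hr) (h.nonneg_left r hr)
  nonneg_right r hr := mul_nonneg (hρ0 r hr) (h.nonneg_right r hr)
  exists_hasDerivWithinAt r hr := by
    obtain ⟨g', hg', hag'⟩ := h.exists_hasDerivWithinAt r hr
    refine ⟨ρ' r * g r + ρ r * g', (hρ r hr).hasDerivWithinAt.mul hg', ?_⟩
    calc c * (ρ r * a r) = ρ r * (c * a r) := by ring
      _ ≤ ρ r * g' := mul_le_mul_of_nonneg_left hag' (hρ0 r hr)
      _ ≤ ρ' r * g r + ρ r * g' := le_add_of_nonneg_left (mul_nonneg (hρ'0 r hr) (h.nonneg r hr))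
  sq_le_mul r hr := by
    calc (ρ r * g r) ^ 2 = ρ r ^ 2 * g r ^ 2 := by ring
      _ ≤ ρ r ^ 2 * (a r * w r) := mul_le_mul_of_nonneg_left (h.sq_le_mul r hr) (sq_nonneg _)
      _ = ρ r * a r * (ρ r * w r) := by ring

lemma two_mul_neg_mul_le (h : IsHardyMultiplier c a w g s) (hc : 0 < c) {r : ℝ} (hr : r ∈ s)
    (x y : ℝ) : 2 * -(g r * x * y) ≤ c / 2 * (a r * x ^ 2) + 2 / c * (w r * y ^ 2) := by
  have ha := h.nonneg_left r hr
  have hw := h.nonneg_right r hr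
  refine two_mul_le_add_of_sq_le_mul (by positivity) (by positivity) ?_
  calc (-(g r * x * y)) ^ 2 = g r ^ 2 * (x * y) ^ 2 := by ring
    _ ≤ a r * w r * (x * y) ^ 2 := by gcongr; exact h.sq_le_mul r hr
    _ = c / 2 * (a r * x ^ 2) * (2 / c * (w r * y ^ 2)) := by field_simp

theorem intervalIntegral_mul_sq_le {l u : ℝ} {F F' : ℝ → ℝ}
    (h : IsHardyMultiplier c a w g (Set.Icc l u)) (hc : 0 < c) (hlu : l ≤ u)
    (hF : ContinuousOn F (Set.Icc l u))
    (hF' : ∀ r ∈ Set.Ioo l u, HasDerivWithinAt F (F' r) (Set.Ioi r) r)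
    (haF : IntervalIntegrable (fun r => a r * F r ^ 2) volume l u)
    (hwF : IntervalIntegrable (fun r => w r * F' r ^ 2) volume l u) (hFu : F u = 0) :
    ∫ r in l..u, a r * F r ^ 2 ≤ 4 / c ^ 2 * ∫ r in l..u, w r * F' r ^ 2 := by
  choose! g' hg' hag' using h.exists_hasDerivWithinAt
  have hderiv (r) (hr : r ∈ Set.Ioo l u) : HasDerivWithinAt (fun r => -(g r * F r ^ 2))
      (-(g' r * F r ^ 2 + g r * (2 * F r * F' r))) (Set.Ioi r) r := by
    simpa only [Nat.cast_ofNat, Nat.add_one_sub_one, pow_one] using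
      ((hg' r (Set.Ioo_subset_Icc_self hr)).fun_mul ((hF' r hr).fun_pow 2)).fun_neg
  have hbound (r) (hr : r ∈ Set.Ioo l u) : -(g' r * F r ^ 2 + g r * (2 * F r * F' r)) ≤
      2 / c * (w r * F' r ^ 2) - c / 2 * (a r * F r ^ 2) := by
    have hr' := Set.Ioo_subset_Icc_self hr
    linarith [h.two_mul_neg_mul_le hc hr' (F r) (F' r),
      mul_le_mul_of_nonneg_right (hag' r hr') (sq_nonneg (F r))]
  have hint := (hwF.const_mul (2 / c)).sub (haF.const_mul (c / 2))
  have hintegrated := intervalIntegral.sub_le_integral_of_hasDeriv_right_of_le hlu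
    (h.continuousOn.fun_mul (hF.fun_pow 2)).fun_neg hderiv
    ((intervalIntegrable_iff_integrableOn_Icc_of_le hlu).1 hint) hbound
  rw [intervalIntegral.integral_sub (hwF.const_mul _) (haF.const_mul _),
    intervalIntegral.integral_const_mul, intervalIntegral.integral_const_mul, hFu] at hintegrated
  have habsorbed : c / 2 * ∫ r in l..u, a r * F r ^ 2 ≤ 2 / c * ∫ r in l..u, w r * F' r ^ 2 := by
    linarith [mul_nonneg (h.nonneg l (Set.left_mem_Icc.2 hlu)) (sq_nonneg (F l))]
  calc ∫ r in l..u, a r * F r ^ 2 = 2 / c * (c / 2 * ∫ r in l..u, a r * F r ^ 2) := by field_simp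
    _ ≤ 2 / c * (2 / c * ∫ r in l..u, w r * F' r ^ 2) := by gcongr
    _ = 4 / c ^ 2 * ∫ r in l..u, w r * F' r ^ 2 := by ring

end IsHardyMultiplier

lemma isHardyMultiplier_Hv (α β : ℝ) :
    IsHardyMultiplier (min (1 - α) (β - 1)) (Hv (α - 2) (β - 2)) (Hv α β) (Hv (α - 1) (β - 1))
      Set.univ where
  continuousOn := (continuous_Hv _ _).continuousOn
  nonneg q _ := (Hv_pos _ _ q).le
  nonneg_left q _ := (Hv_pos _ _ q).le
  nonneg_right q _ := (Hv_pos _ _ q).le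
  exists_hasDerivWithinAt q _ := by
    refine ⟨_, hasDerivWithinAt_Hv_Ioi (α - 1) (β - 1) q, ?_⟩
    rw [show α - 1 - 1 = α - 2 by ring, show β - 1 - 1 = β - 2 by ring]
    refine mul_le_mul_of_nonneg_right ?_ (Hv_pos _ _ q).le
    split_ifs <;> simp
  sq_le_mul q _ := by
    rw [sq, Hv_mul_Hv, Hv_mul_Hv]
    exact le_of_eq (by ring_nf)

end Multiplier

section Polar

lemma sqrt_sq_add_sq_polarCoord_symm {p : ℝ × ℝ} (hp : 0 ≤ p.1) :
    √((polarCoord.symm p).1 ^ 2 + (polarCoord.symm p).2 ^ 2) = p.1 := by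
  rw [polarCoord_symm_apply, Real.sqrt_eq_iff_eq_sq (by positivity) hp]
  linear_combination p.1 ^ 2 * Real.cos_sq_add_sin_sq p.2

lemma exists_polarCoord_symm_notMem_of_isCompact {s : Set (ℝ × ℝ)} (hs : IsCompact s) :
    ∃ R, 0 ≤ R ∧ ∀ p : ℝ × ℝ, R ≤ p.1 → polarCoord.symm p ∉ s := by
  obtain ⟨M, hM⟩ := hs.exists_bound_of_continuousOn
    (f := fun x : ℝ × ℝ => √(x.1 ^ 2 + x.2 ^ 2)) (by fun_prop)
  refine ⟨|M| + 1, by positivity, fun p hp hps => ?_⟩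
  have hp0 : 0 ≤ p.1 := by linarith [abs_nonneg M]
  have hpM := hM _ hps
  rw [sqrt_sq_add_sq_polarCoord_symm hp0, Real.norm_of_nonneg hp0] at hpM
  linarith [le_abs_self M]

lemma integral_eq_intervalIntegral_polarCoord {E : Type*} [NormedAddCommGroup E] [NormedSpace ℝ E]
    {h k : ℝ × ℝ → E} {R : ℝ} (hR : 0 ≤ R) (hk : Continuous k)
    (hk0 : ∀ p : ℝ × ℝ, R ≤ p.1 → k p = 0)
    (hhk : ∀ p ∈ polarCoord.target, p.1 • h (polarCoord.symm p) = k p) :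
    ∫ x, h x = ∫ θ in -Real.pi..Real.pi, ∫ r in 0..R, k (r, θ) := by
  have hsub : Set.Ioc 0 R ×ˢ Set.Ioo (-Real.pi) Real.pi ⊆ polarCoord.target :=
    Set.prod_mono Set.Ioc_subset_Ioi_self subset_rfl
  have hk0' (p) (hp : p ∈ polarCoord.target \ Set.Ioc 0 R ×ˢ Set.Ioo (-Real.pi) Real.pi) :
      k p = 0 :=
    hk0 p (le_of_not_ge fun hpR => hp.2 ⟨⟨hp.1.1, hpR⟩, hp.1.2⟩)
  have hint : IntegrableOn k (Set.Ioc 0 R ×ˢ Set.Ioo (-Real.pi) Real.pi) :=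
    (hk.continuousOn.integrableOn_compact (isCompact_Icc.prod isCompact_Icc)).mono_set
      (Set.prod_mono Set.Ioc_subset_Icc_self Set.Ioo_subset_Icc_self)
  have hmeas : MeasurableSet polarCoord.target := polarCoord.open_target.measurableSet
  rw [← integral_comp_polarCoord_symm, setIntegral_congr_fun hmeas hhk,
    setIntegral_eq_of_subset_of_forall_sdiff_eq_zero hmeas hsub hk0']
  rw [IntegrableOn, Measure.volume_eq_prod, ← Measure.prod_restrict] at hint
  rw [Measure.volume_eq_prod, ← Measure.prod_restrict, integral_prod_symm k hint,
    intervalIntegral.integral_of_le (by linarith [Real.pi_pos]), integral_Ioc_eq_integral_Ioo]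
  simp only [intervalIntegral.integral_of_le hR]

lemma integral_radial_mul_sq_eq_intervalIntegral {w : ℝ → ℝ} {u U : ℝ × ℝ → ℝ} {R : ℝ}
    (hR : 0 ≤ R) (hw : Continuous w) (hU : Continuous U) (hU0 : ∀ p : ℝ × ℝ, R ≤ p.1 → U p = 0)
    (huU : ∀ p ∈ polarCoord.target, u (polarCoord.symm p) = U p) :
    ∫ x : ℝ × ℝ, w √(x.1 ^ 2 + x.2 ^ 2) * u x ^ 2 =
      ∫ θ in -Real.pi..Real.pi, ∫ r in 0..R, r * w r * U (r, θ) ^ 2 := by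
  refine integral_eq_intervalIntegral_polarCoord (k := fun p => p.1 * w p.1 * U p ^ 2)
    hR (by fun_prop) (fun p hp => by simp [hU0 p hp]) fun p hp => ?_
  rw [sqrt_sq_add_sq_polarCoord_symm (le_of_lt hp.1), huU p hp, smul_eq_mul, mul_assoc]

end Polar

section RadialDeriv

/-- The radial derivative `(x / |x|) · ∇f(x)` in the plane, with `|x|` the Euclidean norm, written
out in coordinates because the norm on `ℝ × ℝ` is the supremum norm. It is `0` at the origin. -/
def radialDeriv (f : ℝ × ℝ → ℝ) (x : ℝ × ℝ) : ℝ :=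
  (x.1 * fderiv ℝ f x (1, 0) + x.2 * fderiv ℝ f x (0, 1)) / √(x.1 ^ 2 + x.2 ^ 2)

lemma radialDeriv_polarCoord_symm (f : ℝ × ℝ → ℝ) {p : ℝ × ℝ} (hp : 0 < p.1) :
    radialDeriv f (polarCoord.symm p) =
      fderiv ℝ f (polarCoord.symm p) (Real.cos p.2, Real.sin p.2) := by
  have hdir : (Real.cos p.2, Real.sin p.2) =
      Real.cos p.2 • ((1, 0) : ℝ × ℝ) + Real.sin p.2 • ((0, 1) : ℝ × ℝ) := by simp
  rw [radialDeriv, sqrt_sq_add_sq_polarCoord_symm hp.le, hdir, map_add, map_smul, map_smul]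
  simp only [polarCoord_symm_apply, smul_eq_mul]
  field_simp

variable {f : ℝ × ℝ → ℝ}

lemma hasDerivAt_comp_polarCoord_symm (hf : Differentiable ℝ f) (r θ : ℝ) :
    HasDerivAt (fun r => f (polarCoord.symm (r, θ)))
      (fderiv ℝ f (polarCoord.symm (r, θ)) (Real.cos θ, Real.sin θ)) r := by
  have hray : HasDerivAt (fun r => polarCoord.symm (r, θ)) (Real.cos θ, Real.sin θ) r := by
    simpa using ((hasDerivAt_id r).mul_const (Real.cos θ)).prodMk
      ((hasDerivAt_id r).mul_const (Real.sin θ))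
  exact (hf _).hasFDerivAt.comp_hasDerivAt r hray

theorem IsHardyMultiplier.integral_mul_sq_le {c : ℝ} {a w g : ℝ → ℝ}
    (h : IsHardyMultiplier c a w g (Set.Ici 0)) (hc : 0 < c) (ha : Continuous a)
    (hw : Continuous w) (hf : ContDiff ℝ 1 f) (hfs : HasCompactSupport f) :
    ∫ x : ℝ × ℝ, a √(x.1 ^ 2 + x.2 ^ 2) * f x ^ 2 ≤
      4 / c ^ 2 * ∫ x : ℝ × ℝ, w √(x.1 ^ 2 + x.2 ^ 2) * radialDeriv f x ^ 2 := by
  obtain ⟨R, hR, hRf⟩ := exists_polarCoord_symm_notMem_of_isCompact hfs.isCompact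
  let F (p : ℝ × ℝ) : ℝ := f (polarCoord.symm p)
  let F' (p : ℝ × ℝ) : ℝ := fderiv ℝ f (polarCoord.symm p) (Real.cos p.2, Real.sin p.2)
  have hF : Continuous F := hf.continuous.comp continuous_polarCoord_symm
  have hF' : Continuous F' :=
    ((hf.continuous_fderiv one_ne_zero).comp continuous_polarCoord_symm).clm_apply (by fun_prop)
  have hF0 (p : ℝ × ℝ) (hp : R ≤ p.1) : F p = 0 :=
    image_eq_zero_of_notMem_tsupport (f := f) (hRf p hp)
  have hF'0 (p : ℝ × ℝ) (hp : R ≤ p.1) : F' p = 0 :=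
    DFunLike.congr_fun (image_eq_zero_of_notMem_tsupport (f := fderiv ℝ f) fun hmem =>
      hRf p hp (tsupport_fderiv_subset ℝ hmem)) _
  have hrays : IsHardyMultiplier c (fun r => r * a r) (fun r => r * w r) (fun r => r * g r)
      (Set.Icc 0 R) :=
    (h.mul_left (fun r _ => hasDerivAt_id' r) (fun _ hr => hr) fun _ _ => zero_le_one).mono
      Set.Icc_subset_Ici_self
  rw [integral_radial_mul_sq_eq_intervalIntegral hR ha hF hF0 fun _ _ => rfl,
    integral_radial_mul_sq_eq_intervalIntegral hR hw hF' hF'0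
      fun p hp => radialDeriv_polarCoord_symm f hp.1,
    ← intervalIntegral.integral_const_mul]
  refine intervalIntegral.integral_mono (by linarith [Real.pi_pos])
    (Continuous.intervalIntegrable (by fun_prop) _ _)
    (Continuous.intervalIntegrable (by fun_prop) _ _) fun θ => ?_
  have hFF' (r : ℝ) : HasDerivAt (fun r => F (r, θ)) (F' (r, θ)) r :=
    hasDerivAt_comp_polarCoord_symm (hf.differentiable one_ne_zero) r θ
  exact hrays.intervalIntegral_mul_sq_le hc hR (by fun_prop)
    (fun r _ => (hFF' r).hasDerivWithinAt)
    (Continuous.intervalIntegrable (by fun_prop) _ _)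
    (Continuous.intervalIntegrable (by fun_prop) _ _) (hF0 (R, θ) le_rfl)

end RadialDeriv

theorem stmt3_general {α β : ℝ} (hα : α < 1) (hβ : 1 < β) (t : ℝ) {f : ℝ × ℝ → ℝ}
    (hf : ContDiff ℝ 1 f) (hfs : HasCompactSupport f) :
    ∫ x : ℝ × ℝ, Hv α β (√(x.1 ^ 2 + x.2 ^ 2) - t)
        * (1 + |√(x.1 ^ 2 + x.2 ^ 2) - t|) ^ (-(2 : ℝ)) * f x ^ 2
      ≤ 4 / min (1 - α) (β - 1) ^ 2 *
        ∫ x : ℝ × ℝ, Hv α β (√(x.1 ^ 2 + x.2 ^ 2) - t) * radialDeriv f x ^ 2 := by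
  have hc : 0 < min (1 - α) (β - 1) := lt_min (sub_pos.2 hα) (sub_pos.2 hβ)
  have continuous_shift (γ δ : ℝ) : Continuous fun r => Hv γ δ (r - t) :=
    (continuous_Hv γ δ).comp (by fun_prop)
  simp only [Hv_mul_rpow, ← sub_eq_add_neg]
  exact (((isHardyMultiplier_Hv α β).comp_sub_const t).mono (Set.subset_univ _)).integral_mul_sq_le
    hc (continuous_shift _ _) (continuous_shift _ _) hf hfs

/-- Weighted Hardy inequality (Proposition `hardy` / `prphard` of the paper);
the constant is uniform in `t`. -/
theorem stmt3 (α β : ℝ) (hα : α < 1) (hβ : 1 < β) :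
    ∃ C : ℝ, 0 < C ∧
      ∀ t : ℝ, 0 ≤ t → ∀ f : ℝ × ℝ → ℝ, ContDiff ℝ 1 f → HasCompactSupport f →
        ∫ x : ℝ × ℝ,
            Hv α β (Real.sqrt (x.1^2 + x.2^2) - t)
              * (1 + |Real.sqrt (x.1^2 + x.2^2) - t|) ^ (-(2:ℝ)) * (f x)^2
          ≤ C * ∫ x : ℝ × ℝ,
              Hv α β (Real.sqrt (x.1^2 + x.2^2) - t)
                * ((x.1 * fderiv ℝ f x (1, 0) + x.2 * fderiv ℝ f x (0, 1))
                  / Real.sqrt (x.1^2 + x.2^2))^2 := by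
  have hc : 0 < min (1 - α) (β - 1) := lt_min (sub_pos.2 hα) (sub_pos.2 hβ)
  exact ⟨_, div_pos four_pos (pow_pos hc 2), fun t _ _ hf hfs => stmt3_general hα hβ t hf hfs⟩
end
end

section
/- Let M > 0 and let φ : [0,∞) × [0,∞) → ℝ, (t,r) ↦ φ(t,r), be C¹ with |∂_tφ(t,r)| + |∂_rφ(t,r)| ≤ M (1+t+r)^{−1/2} (1+|t−r|)^{−3/2} for all t, r ≥ 0. Define a(t,R) = ∫₀^R r ( (∂_rφ)² + (∂_tφ)² )(t,r) dr and E(t) = ∫₀^∞ r ( (∂_rφ)² + (∂_tφ)² )(t,r) dr (which is finite). Then there is an absolute constant C such that for all t ≥ 0: |a(t,R)| ≤ C M² (1+|t−R|)^{−2} whenever 0 ≤ R ≤ t, and |a(t,R) − E(t)| ≤ C M² (1+|t−R|)^{−2} whenever R ≥ t. -/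
open MeasureTheory

noncomputable section

/-- partial derivative in the time variable of a function `ℝ → ℝ → ℝ` ((t,r) curried). -/
def qdt (φ : ℝ → ℝ → ℝ) : ℝ → ℝ → ℝ :=
  fun t r => deriv (fun s => φ s r) t

/-- partial derivative in the radial variable. -/
def qdr (φ : ℝ → ℝ → ℝ) : ℝ → ℝ → ℝ :=
  fun t r => deriv (fun s => φ t s) r

/-- `a(t,R) = ∫₀^R r((∂_rφ)² + (∂_tφ)²)(t,r) dr`. -/
def aER (φ : ℝ → ℝ → ℝ) (t R : ℝ) : ℝ :=
  ∫ r in (0:ℝ)..R, r * ((qdr φ t r)^2 + (qdt φ t r)^2)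

/-- the energy `E(t) = ∫₀^∞ r((∂_rφ)² + (∂_tφ)²)(t,r) dr`. -/
def EER (φ : ℝ → ℝ → ℝ) (t : ℝ) : ℝ :=
  ∫ r in Set.Ioi (0:ℝ), r * ((qdr φ t r)^2 + (qdt φ t r)^2)

/-!
Since `r ≤ 1 + t + r`, squaring the decay hypothesis bounds the energy density by
`M² (1 + |t - r|)^(-3)`, uniformly in `t`. The coefficient `a(t,R)` integrates this density over
`[0,R]` and `E(t) - a(t,R)` over `[R,∞)`. In the two regimes `R ≤ t` and `t ≤ R` the respective
interval stays on one side of the light cone `r = t`, at distance at least `|t - R|` from it, and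
integrating the bound beyond that distance turns the power `-3` into `-2`.
-/

open Set

section LightConeWeight

variable {p : ℝ}

theorem integrable_one_add_abs_sub_rpow_neg (hp : 1 < p) (t : ℝ) :
    Integrable fun r : ℝ => (1 + |t - r|) ^ (-p) :=
  (integrable_one_add_norm (E := ℝ) (by simpa using hp)).comp_sub_left t

theorem integral_Ioi_one_add_abs_sub_rpow_neg (hp : 1 < p) {t R : ℝ} (htR : t ≤ R) :
    ∫ r in Ioi R, (1 + |t - r|) ^ (-p) = (1 + |t - R|) ^ (1 - p) / (p - 1) := by
  have habs : ∀ r, R ≤ r → 1 + |t - r| = 1 - t + r := fun r hr => by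
    rw [abs_of_nonpos (by linarith)]; ring
  calc ∫ r in Ioi R, (1 + |t - r|) ^ (-p)
      = ∫ r in (1 - t + ·) ⁻¹' Ioi (1 - t + R), (1 - t + r) ^ (-p) := by
        rw [preimage_const_add_Ioi, add_sub_cancel_left]
        exact setIntegral_congr_fun measurableSet_Ioi fun r hr => by
          simp only [habs r (mem_Ioi.1 hr).le]
    _ = ∫ x in Ioi (1 - t + R), x ^ (-p) :=
        (measurePreserving_add_left volume (1 - t)).setIntegral_preimage_emb
          (measurableEmbedding_addLeft _) (fun x => x ^ (-p)) _
    _ = (1 + |t - R|) ^ (1 - p) / (p - 1) := by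
        rw [integral_Ioi_rpow_of_lt (by linarith) (by linarith), habs R le_rfl,
          neg_add_eq_sub, ← neg_sub p 1, neg_div_neg_eq]

theorem integral_Iic_one_add_abs_sub_rpow_neg (hp : 1 < p) {t R : ℝ} (hRt : R ≤ t) :
    ∫ r in Iic R, (1 + |t - r|) ^ (-p) = (1 + |t - R|) ^ (1 - p) / (p - 1) := by
  have habs : ∀ r : ℝ, |-t - -r| = |t - r| := fun r => by
    rw [neg_sub_neg, abs_sub_comm]
  have hreflect := integral_comp_neg_Iic R fun x => (1 + |-t - x|) ^ (-p)
  rw [integral_Ioi_one_add_abs_sub_rpow_neg hp (neg_le_neg hRt)] at hreflect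
  simpa only [habs] using hreflect

variable {E : Type*} [NormedAddCommGroup E] {f : ℝ → E} {b t R K : ℝ}

theorem integrableOn_Ioi_of_norm_le_one_add_abs_sub_rpow_neg (hp : 1 < p)
    (hf : AEStronglyMeasurable f (volume.restrict (Ioi b)))
    (hfK : ∀ r ∈ Ioi b, ‖f r‖ ≤ K * (1 + |t - r|) ^ (-p)) :
    IntegrableOn f (Ioi b) :=
  ((integrable_one_add_abs_sub_rpow_neg hp t).const_mul K).integrableOn.mono' hf
    (ae_restrict_of_forall_mem measurableSet_Ioi hfK)

variable [NormedSpace ℝ E]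

theorem norm_integral_Ioi_le_of_norm_le_one_add_abs_sub_rpow_neg (hp : 1 < p) (htR : t ≤ R)
    (hfK : ∀ r ∈ Ioi R, ‖f r‖ ≤ K * (1 + |t - r|) ^ (-p)) :
    ‖∫ r in Ioi R, f r‖ ≤ K * ((1 + |t - R|) ^ (1 - p) / (p - 1)) := by
  rw [← integral_Ioi_one_add_abs_sub_rpow_neg hp htR, ← integral_const_mul]
  exact norm_integral_le_of_norm_le
    ((integrable_one_add_abs_sub_rpow_neg hp t).const_mul K).integrableOn
    (ae_restrict_of_forall_mem measurableSet_Ioi hfK)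

theorem norm_intervalIntegral_le_of_norm_le_one_add_abs_sub_rpow_neg (hp : 1 < p) (hK : 0 ≤ K)
    (hbR : b ≤ R) (hRt : R ≤ t) (hfK : ∀ r ∈ Ioc b R, ‖f r‖ ≤ K * (1 + |t - r|) ^ (-p)) :
    ‖∫ r in b..R, f r‖ ≤ K * ((1 + |t - R|) ^ (1 - p) / (p - 1)) := by
  have hweight := (integrable_one_add_abs_sub_rpow_neg hp t).const_mul K
  rw [← integral_Iic_one_add_abs_sub_rpow_neg hp hRt, ← integral_const_mul,
    intervalIntegral.integral_of_le hbR]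
  calc ‖∫ r in Ioc b R, f r‖
      ≤ ∫ r in Ioc b R, K * (1 + |t - r|) ^ (-p) :=
        norm_integral_le_of_norm_le hweight.integrableOn
          (ae_restrict_of_forall_mem measurableSet_Ioc hfK)
    _ ≤ ∫ r in Iic R, K * (1 + |t - r|) ^ (-p) :=
        setIntegral_mono_set hweight.integrableOn (ae_of_all _ fun r => by positivity)
          Ioc_subset_Iic_self.eventuallyLE

end LightConeWeight

/-- The energy density `r((∂_rφ)² + (∂_tφ)²)(t,r)`, the common integrand of `aER` and `EER`. -/
def energyDensity (φ : ℝ → ℝ → ℝ) (t r : ℝ) : ℝ :=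
  r * ((qdr φ t r) ^ 2 + (qdt φ t r) ^ 2)

section EnergyDensity

variable {φ : ℝ → ℝ → ℝ} {M q t r : ℝ}

theorem measurable_energyDensity (hφ : Continuous φ.uncurry) (t : ℝ) :
    Measurable (energyDensity φ t) := by
  have hdr : Measurable (qdr φ t) := measurable_deriv (φ t)
  have hdt : Measurable (qdt φ t) :=
    (measurable_deriv_with_param (f := fun r s => φ s r) (hφ.comp continuous_swap)).comp
      (measurable_id.prodMk measurable_const)
  exact measurable_id.mul ((hdr.pow_const 2).add (hdt.pow_const 2))

theorem abs_energyDensity_le (ht : 0 ≤ t) (hr : 0 ≤ r)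
    (hdecay : |qdt φ t r| + |qdr φ t r| ≤
      M * (1 + t + r) ^ (-(1 / 2) : ℝ) * (1 + |t - r|) ^ (-q)) :
    |energyDensity φ t r| ≤ M ^ 2 * (1 + |t - r|) ^ (-(2 * q)) := by
  have hsum : 0 < 1 + t + r := by linarith
  have hsq_radial : ((1 + t + r) ^ (-(1 / 2) : ℝ)) ^ 2 = (1 + t + r)⁻¹ := by
    rw [← Real.rpow_mul_natCast hsum.le, ← Real.rpow_neg_one]; norm_num
  have hsq_cone : ((1 + |t - r|) ^ (-q)) ^ 2 = (1 + |t - r|) ^ (-(2 * q)) := by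
    rw [← Real.rpow_mul_natCast (by positivity)]; ring_nf
  have hsq_le : qdr φ t r ^ 2 + qdt φ t r ^ 2 ≤ (|qdt φ t r| + |qdr φ t r|) ^ 2 := by
    rw [add_sq, sq_abs, sq_abs]
    linarith [mul_nonneg (abs_nonneg (qdt φ t r)) (abs_nonneg (qdr φ t r))]
  have hratio : r * (1 + t + r)⁻¹ ≤ 1 := by
    rw [← div_eq_mul_inv, div_le_one hsum]; linarith
  rw [energyDensity, abs_of_nonneg (by positivity)]
  calc r * (qdr φ t r ^ 2 + qdt φ t r ^ 2)
      ≤ r * (M * (1 + t + r) ^ (-(1 / 2) : ℝ) * (1 + |t - r|) ^ (-q)) ^ 2 := by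
        gcongr
        exact hsq_le.trans (pow_le_pow_left₀ (by positivity) hdecay 2)
    _ = r * (1 + t + r)⁻¹ * (M ^ 2 * (1 + |t - r|) ^ (-(2 * q))) := by
        rw [mul_pow, mul_pow, hsq_radial, hsq_cone]; ring
    _ ≤ M ^ 2 * (1 + |t - r|) ^ (-(2 * q)) :=
        mul_le_of_le_one_left (by positivity) hratio

end EnergyDensity

theorem stmt11_general {φ : ℝ → ℝ → ℝ} {M q t : ℝ}
    (hφ : Differentiable ℝ fun p : ℝ × ℝ => φ p.1 p.2) (hq : 1 / 2 < q) (ht : 0 ≤ t)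
    (hdecay : ∀ r, 0 ≤ r →
      |qdt φ t r| + |qdr φ t r| ≤ M * (1 + t + r) ^ (-(1 / 2) : ℝ) * (1 + |t - r|) ^ (-q)) :
    IntegrableOn (fun r => r * ((qdr φ t r) ^ 2 + (qdt φ t r) ^ 2)) (Ioi 0) ∧
    (∀ R, 0 ≤ R → R ≤ t →
      |aER φ t R| ≤ M ^ 2 * ((1 + |t - R|) ^ (1 - 2 * q) / (2 * q - 1))) ∧
    (∀ R, t ≤ R →
      |aER φ t R - EER φ t| ≤ M ^ 2 * ((1 + |t - R|) ^ (1 - 2 * q) / (2 * q - 1))) := by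
  have hp : 1 < 2 * q := by linarith
  have hbound : ∀ r, 0 < r → ‖energyDensity φ t r‖ ≤ M ^ 2 * (1 + |t - r|) ^ (-(2 * q)) :=
    fun r hr => abs_energyDensity_le ht hr.le (hdecay r hr.le)
  have hintegrable : IntegrableOn (energyDensity φ t) (Ioi 0) :=
    integrableOn_Ioi_of_norm_le_one_add_abs_sub_rpow_neg hp
      (measurable_energyDensity hφ.continuous t).aestronglyMeasurable hbound
  refine ⟨hintegrable, fun R hR hRt => ?_, fun R htR => ?_⟩
  · exact norm_intervalIntegral_le_of_norm_le_one_add_abs_sub_rpow_neg hp (sq_nonneg M) hR hRt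
      fun r hr => hbound r hr.1
  · have hR : 0 ≤ R := ht.trans htR
    have htail : aER φ t R + ∫ r in Ioi R, energyDensity φ t r = EER φ t :=
      intervalIntegral.integral_interval_add_Ioi hintegrable
        (hintegrable.mono_set (Ioi_subset_Ioi hR))
    rw [← htail, sub_add_cancel_left, abs_neg]
    exact norm_integral_Ioi_le_of_norm_le_one_add_abs_sub_rpow_neg hp htR
      fun r hr => hbound r (hR.trans_lt hr)

/-- Decay of the Einstein–Rosen metric coefficient `a` (Section 1.2 of the paper). -/
theorem stmt11 :
    ∃ C : ℝ, 0 < C ∧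
      ∀ (M : ℝ) (φ : ℝ → ℝ → ℝ), 0 < M →
        ContDiff ℝ 1 (fun p : ℝ × ℝ => φ p.1 p.2) →
        (∀ t r : ℝ, 0 ≤ t → 0 ≤ r →
          |qdt φ t r| + |qdr φ t r| ≤
            M * (1 + t + r) ^ (-(1/2) : ℝ) * (1 + |t - r|) ^ (-(3/2) : ℝ)) →
        ∀ t : ℝ, 0 ≤ t →
          IntegrableOn (fun r => r * ((qdr φ t r)^2 + (qdt φ t r)^2)) (Set.Ioi 0) ∧
          (∀ R : ℝ, 0 ≤ R → R ≤ t →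
            |aER φ t R| ≤ C * M^2 * (1 + |t - R|) ^ (-(2:ℝ))) ∧
          (∀ R : ℝ, t ≤ R →
            |aER φ t R - EER φ t| ≤ C * M^2 * (1 + |t - R|) ^ (-(2:ℝ))) := by
  refine ⟨1 / 2, by norm_num, fun M φ _ hφ hdecay t ht => ?_⟩
  have hrate (x : ℝ) : M ^ 2 * (x ^ (1 - 2 * (3 / 2) : ℝ) / (2 * (3 / 2) - 1)) =
      1 / 2 * M ^ 2 * x ^ (-(2 : ℝ)) := by ring_nf
  simpa only [hrate] using
    stmt11_general (hφ.differentiable one_ne_zero) (by norm_num) ht (hdecay t · ht)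
end
end

section
/- Let μ > 3/2. Then there is a constant C = C(μ) such that for every T ≥ 1: ∫₀^∞ β (β+T)^{−1/2} (1+β)^{−μ} dβ ≤ C T^{−1/2} E_μ(T), where E_μ(T) = T^{2−μ} if 3/2 < μ < 2, E_μ(T) = log(1+T) if μ = 2, and E_μ(T) = 1 if μ > 2; in particular the integral converges since μ > 3/2. -/
open MeasureTheory

noncomputable section

/-!
Write `s` for the decay exponent of the factor in `β + T` (here `1 / 2`). Since `β ≤ 1 + β`, the
integrand is at most `a ^ (-s) * (1 + β) ^ (1 - μ)` for every `0 < a ≤ β + T`. Taking `a = T` for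
`β ≤ T` leaves `T ^ (-s)` times the elementary integral of `(1 + β) ^ (1 - μ)` over `[0, T]`, which
produces the three regimes. Taking `a = 1 + β` for `β > T` gives the tail of `β ^ (1 - μ - s)`,
which converges because `s + μ > 2` and contributes a multiple of `T ^ (-s) * T ^ (2 - μ)`.
-/

section OneAddRpow

variable {r T : ℝ}

lemma intervalIntegrable_one_add_rpow (hT : -1 < T) :
    IntervalIntegrable (fun β : ℝ ↦ (1 + β) ^ r) volume 0 T := by
  refine ContinuousOn.intervalIntegrable fun β hβ ↦ ?_
  have hβ' : 0 < 1 + β := by linarith [lt_min (by norm_num : (-1 : ℝ) < 0) hT, hβ.1]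
  exact (ContinuousAt.rpow_const (by fun_prop) (.inl hβ'.ne')).continuousWithinAt

lemma integral_one_add_rpow (hr : r ≠ -1) (hT : -1 < T) :
    ∫ β in (0 : ℝ)..T, (1 + β) ^ r = ((1 + T) ^ (r + 1) - 1) / (r + 1) := by
  have h0 : (0 : ℝ) ∉ Set.uIcc 1 (1 + T) := Set.notMem_uIcc_of_lt one_pos (by linarith)
  rw [intervalIntegral.integral_comp_add_left (fun x : ℝ ↦ x ^ r) 1, add_zero,
    integral_rpow (.inr ⟨hr, h0⟩), Real.one_rpow]

lemma integral_one_add_rpow_neg_one (hT : -1 < T) :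
    ∫ β in (0 : ℝ)..T, (1 + β) ^ (-1 : ℝ) = Real.log (1 + T) := by
  simp only [Real.rpow_neg_one]
  rw [intervalIntegral.integral_comp_add_left (fun x : ℝ ↦ x⁻¹) 1, add_zero,
    integral_inv_of_pos one_pos (by linarith), div_one]

lemma integral_one_add_rpow_le_of_neg_one_lt (hr : -1 < r) (hT : 1 ≤ T) :
    ∫ β in (0 : ℝ)..T, (1 + β) ^ r ≤ 2 ^ (r + 1) / (r + 1) * T ^ (r + 1) := by
  have hr' : 0 < r + 1 := by linarith
  have one_add_le : (1 + T) ^ (r + 1) ≤ 2 ^ (r + 1) * T ^ (r + 1) := by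
    rw [← Real.mul_rpow zero_le_two (by linarith)]
    exact Real.rpow_le_rpow (by linarith) (by linarith) hr'.le
  rw [integral_one_add_rpow hr.ne' (by linarith), div_mul_eq_mul_div]
  gcongr
  linarith

lemma integral_one_add_rpow_le_of_lt_neg_one (hr : r < -1) (hT : -1 < T) :
    ∫ β in (0 : ℝ)..T, (1 + β) ^ r ≤ 1 / (-(r + 1)) := by
  have hr' : 0 < -(r + 1) := by linarith
  rw [integral_one_add_rpow hr.ne hT, ← neg_div_neg_eq]
  gcongr
  linarith [Real.rpow_nonneg (by linarith : 0 ≤ 1 + T) (r + 1)]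

end OneAddRpow

/-- The growth factor `E_μ(T)`, i.e. `T ^ max (2 - μ) 0` with a logarithm at the borderline exponent
`μ = 2`: the order of magnitude of `∫ β in 0..T, (1 + β) ^ (1 - μ)` for `T ≥ 1`. -/
def growthFactor (μ T : ℝ) : ℝ :=
  if μ = 2 then Real.log (1 + T) else if μ < 2 then T ^ (2 - μ) else 1

section GrowthFactor

variable {μ T : ℝ}

lemma growthFactor_two : growthFactor 2 T = Real.log (1 + T) := if_pos rfl

lemma growthFactor_of_lt_two (hμ : μ < 2) : growthFactor μ T = T ^ (2 - μ) := by
  rw [growthFactor, if_neg hμ.ne, if_pos hμ]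

lemma growthFactor_of_two_lt (hμ : 2 < μ) : growthFactor μ T = 1 := by
  rw [growthFactor, if_neg hμ.ne', if_neg hμ.not_gt]

lemma exists_integral_one_add_rpow_le_growthFactor (μ : ℝ) :
    ∃ C : ℝ, 0 < C ∧ ∀ T : ℝ, 1 ≤ T →
      ∫ β in (0 : ℝ)..T, (1 + β) ^ (1 - μ) ≤ C * growthFactor μ T := by
  have exponent : 1 - μ + 1 = 2 - μ := by ring
  rcases lt_trichotomy μ 2 with hμ | rfl | hμ
  · have hμ' : 0 < 2 - μ := by linarith
    refine ⟨2 ^ (2 - μ) / (2 - μ), div_pos (by positivity) hμ', fun T hT ↦ ?_⟩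
    rw [growthFactor_of_lt_two hμ, ← exponent]
    exact integral_one_add_rpow_le_of_neg_one_lt (by linarith) hT
  · refine ⟨1, one_pos, fun T hT ↦ ?_⟩
    rw [growthFactor_two, one_mul, show (1 - 2 : ℝ) = -1 by norm_num,
      integral_one_add_rpow_neg_one (by linarith)]
  · have hμ' : 0 < -(2 - μ) := by linarith
    refine ⟨1 / (-(2 - μ)), by positivity, fun T hT ↦ ?_⟩
    rw [growthFactor_of_two_lt hμ, mul_one, ← exponent]
    exact integral_one_add_rpow_le_of_lt_neg_one (by linarith) (by linarith)

lemma log_two_mul_rpow_le_growthFactor (hT : 1 ≤ T) :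
    Real.log 2 * T ^ (2 - μ) ≤ growthFactor μ T := by
  have log_two_le_one : Real.log 2 ≤ 1 := by linarith [Real.log_two_lt_d9]
  have rpow_nonneg : 0 ≤ T ^ (2 - μ) := Real.rpow_nonneg (by linarith) _
  rcases lt_trichotomy μ 2 with hμ | rfl | hμ
  · rw [growthFactor_of_lt_two hμ]
    exact mul_le_of_le_one_left rpow_nonneg log_two_le_one
  · rw [growthFactor_two, sub_self, Real.rpow_zero, mul_one]
    exact Real.log_le_log two_pos (by linarith)
  · rw [growthFactor_of_two_lt hμ]
    exact mul_le_one₀ log_two_le_one rpow_nonneg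
      (Real.rpow_le_one_of_one_le_of_nonpos hT (by linarith))

end GrowthFactor

/-- The integrand of the first factor, with the square root of `β + T` replaced by an arbitrary
power `s`. -/
def firstFactorIntegrand (s μ T β : ℝ) : ℝ := β * ((β + T) ^ s)⁻¹ * (1 + β) ^ (-μ)

section FirstFactorIntegrand

variable {s μ T : ℝ}

lemma firstFactorIntegrand_nonneg {β : ℝ} (hT : 0 ≤ T) (hβ : 0 ≤ β) :
    0 ≤ firstFactorIntegrand s μ T β := by
  unfold firstFactorIntegrand
  positivity

lemma firstFactorIntegrand_le {a β : ℝ} (hs : 0 ≤ s) (hβ : 0 ≤ β) (ha : 0 < a)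
    (haβ : a ≤ β + T) :
    firstFactorIntegrand s μ T β ≤ a ^ (-s) * (1 + β) ^ (1 - μ) := by
  have hβ' : 0 < 1 + β := by linarith
  have hβT : 0 < β + T := ha.trans_le haβ
  have le_one_add : β ≤ 1 + β := by linarith
  calc β * ((β + T) ^ s)⁻¹ * (1 + β) ^ (-μ)
      ≤ (1 + β) * (a ^ s)⁻¹ * (1 + β) ^ (-μ) := by
        gcongr
    _ = a ^ (-s) * (1 + β) ^ (1 - μ) := by
        rw [Real.rpow_neg ha.le, sub_eq_add_neg, Real.rpow_add hβ', Real.rpow_one]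
        ring

lemma firstFactorIntegrand_le_one_add_rpow {β : ℝ} (hs : 0 ≤ s) (hT : 1 ≤ T) (hβ : 0 ≤ β) :
    firstFactorIntegrand s μ T β ≤ (1 + β) ^ (1 - μ - s) := by
  have hβ' : 0 < 1 + β := by linarith
  calc firstFactorIntegrand s μ T β
      ≤ (1 + β) ^ (-s) * (1 + β) ^ (1 - μ) := firstFactorIntegrand_le hs hβ hβ' (by linarith)
    _ = (1 + β) ^ (1 - μ - s) := by
        rw [← Real.rpow_add hβ']
        ring_nf

lemma integrableOn_firstFactorIntegrand (hs : 0 ≤ s) (hμ : 2 < s + μ) (hT : 1 ≤ T) :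
    IntegrableOn (firstFactorIntegrand s μ T) (Set.Ioi 0) := by
  have dominating : IntegrableOn (fun β : ℝ ↦ (1 + β) ^ (1 - μ - s)) (Set.Ioi 0) := by
    simpa only [add_comm] using
      integrableOn_add_rpow_Ioi_of_lt (a := 1 - μ - s) (c := 0) (m := 1) (by linarith)
        (by norm_num)
  have measurable : Measurable (firstFactorIntegrand s μ T) := by
    unfold firstFactorIntegrand
    fun_prop
  refine dominating.mono' measurable.aestronglyMeasurable
    (ae_restrict_of_forall_mem measurableSet_Ioi fun β hβ ↦ ?_)
  rw [Real.norm_of_nonneg (firstFactorIntegrand_nonneg (by linarith) (Set.mem_Ioi.1 hβ).le)]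
  exact firstFactorIntegrand_le_one_add_rpow hs hT (Set.mem_Ioi.1 hβ).le

lemma intervalIntegral_firstFactorIntegrand_le (hs : 0 ≤ s) (hT : 0 < T) :
    ∫ β in (0 : ℝ)..T, firstFactorIntegrand s μ T β ≤
      T ^ (-s) * ∫ β in (0 : ℝ)..T, (1 + β) ^ (1 - μ) := by
  rw [← intervalIntegral.integral_const_mul, intervalIntegral.integral_of_le hT.le,
    intervalIntegral.integral_of_le hT.le]
  exact integral_mono_of_nonneg
    (ae_restrict_of_forall_mem measurableSet_Ioc fun β hβ ↦
      firstFactorIntegrand_nonneg hT.le hβ.1.le)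
    ((intervalIntegrable_one_add_rpow (by linarith)).const_mul _).1
    (ae_restrict_of_forall_mem measurableSet_Ioc fun β hβ ↦
      firstFactorIntegrand_le hs hβ.1.le hT (by linarith [hβ.1]))

lemma setIntegral_Ioi_firstFactorIntegrand_le (hs : 0 ≤ s) (hμ : 2 < s + μ) (hT : 1 ≤ T) :
    ∫ β in Set.Ioi T, firstFactorIntegrand s μ T β ≤
      T ^ (-s) * (T ^ (2 - μ) / (s + μ - 2)) := by
  have hT0 : 0 < T := by linarith
  have le_rpow : ∀ β ∈ Set.Ioi T, firstFactorIntegrand s μ T β ≤ β ^ (1 - μ - s) := by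
    intro β hβ
    have hβ0 : 0 < β := hT0.trans hβ
    exact (firstFactorIntegrand_le_one_add_rpow hs hT hβ0.le).trans
      (Real.rpow_le_rpow_of_nonpos hβ0 (by linarith) (by linarith))
  calc ∫ β in Set.Ioi T, firstFactorIntegrand s μ T β
      ≤ ∫ β in Set.Ioi T, β ^ (1 - μ - s) :=
        setIntegral_mono_on
          ((integrableOn_firstFactorIntegrand hs hμ hT).mono_set (Set.Ioi_subset_Ioi hT0.le))
          (integrableOn_Ioi_rpow_of_lt (by linarith) hT0) measurableSet_Ioi le_rpow
    _ = -T ^ (1 - μ - s + 1) / (1 - μ - s + 1) := integral_Ioi_rpow_of_lt (by linarith) hT0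
    _ = T ^ (-s) * (T ^ (2 - μ) / (s + μ - 2)) := by
        rw [show 1 - μ - s + 1 = -(s + μ - 2) by ring, neg_div_neg_eq, ← mul_div_assoc,
          ← Real.rpow_add hT0]
        ring_nf

lemma setIntegral_firstFactorIntegrand_le (hs : 0 ≤ s) (hμ : 2 < s + μ) (hT : 1 ≤ T) :
    ∫ β in Set.Ioi 0, firstFactorIntegrand s μ T β ≤
      T ^ (-s) * ((∫ β in (0 : ℝ)..T, (1 + β) ^ (1 - μ)) + T ^ (2 - μ) / (s + μ - 2)) := by
  have hT0 : 0 < T := by linarith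
  have integrable := integrableOn_firstFactorIntegrand hs hμ hT
  rw [← intervalIntegral.integral_interval_add_Ioi integrable
    (integrable.mono_set (Set.Ioi_subset_Ioi hT0.le)), mul_add]
  exact add_le_add (intervalIntegral_firstFactorIntegrand_le hs hT0)
    (setIntegral_Ioi_firstFactorIntegrand_le hs hμ hT)

end FirstFactorIntegrand

theorem stmt19_general (s μ : ℝ) (hs : 0 ≤ s) (hμ : 2 < s + μ) :
    ∃ C : ℝ, 0 < C ∧
      ∀ T : ℝ, 1 ≤ T →
        IntegrableOn (firstFactorIntegrand s μ T) (Set.Ioi 0) ∧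
        ∫ β in Set.Ioi (0 : ℝ), firstFactorIntegrand s μ T β
          ≤ C * T ^ (-s) * growthFactor μ T := by
  obtain ⟨C, hC, head_le⟩ := exists_integral_one_add_rpow_le_growthFactor μ
  have hμ' : 0 < s + μ - 2 := by linarith
  have log_two_pos : 0 < Real.log 2 := Real.log_pos one_lt_two
  refine ⟨C + 1 / Real.log 2 / (s + μ - 2),
    add_pos hC (div_pos (one_div_pos.2 log_two_pos) hμ'), fun T hT ↦
    ⟨integrableOn_firstFactorIntegrand hs hμ hT, ?_⟩⟩
  have rpow_le : T ^ (2 - μ) ≤ 1 / Real.log 2 * growthFactor μ T := by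
    rw [one_div_mul_eq_div, le_div_iff₀' log_two_pos]
    exact log_two_mul_rpow_le_growthFactor hT
  calc ∫ β in Set.Ioi (0 : ℝ), firstFactorIntegrand s μ T β
      ≤ T ^ (-s) * ((∫ β in (0 : ℝ)..T, (1 + β) ^ (1 - μ)) + T ^ (2 - μ) / (s + μ - 2)) :=
        setIntegral_firstFactorIntegrand_le hs hμ hT
    _ ≤ T ^ (-s) * (C * growthFactor μ T
          + 1 / Real.log 2 * growthFactor μ T / (s + μ - 2)) := by
        gcongr
        exact head_le T hT
    _ = (C + 1 / Real.log 2 / (s + μ - 2)) * T ^ (-s) * growthFactor μ T := by ring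

/-- One-dimensional integral estimate for the 'first factor' in the bound of the piece
`I₂` in the proof of the L∞–L∞ estimate for the 2+1-dimensional wave equation. -/
theorem stmt19 (μ : ℝ) (hμ : 3/2 < μ) :
    ∃ C : ℝ, 0 < C ∧
      ∀ T : ℝ, 1 ≤ T →
        IntegrableOn (fun β : ℝ => β * (Real.sqrt (β + T))⁻¹ * (1 + β) ^ (-μ))
          (Set.Ioi 0) ∧
        ∫ β in Set.Ioi (0:ℝ), β * (Real.sqrt (β + T))⁻¹ * (1 + β) ^ (-μ)
          ≤ C * T ^ (-(1/2) : ℝ) *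
              (if μ = 2 then Real.log (1 + T)
               else if μ < 2 then T ^ (2 - μ) else 1) := by
  simp only [Real.sqrt_eq_rpow]
  exact stmt19_general (1 / 2) μ (by norm_num) (by linarith)
end
end
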